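/- For every architecture A, finite alphabet Σ, and every sentence Φ of PDL(A,Σ) (the fragment of ICPDL without converse, intersection, and loop), there exists a CPDS S over (A,Σ) such that L(S) = L_cbm(Φ), the set of CBMs over (A,Σ) satisfying Φ. -/

import Mathlib

/-! ### Architectures and concurrent behaviors with matching (CBMs) -/

/-- The three kinds of data structures. -/
inductive DSKind : Type
  | stack
  | queue
  | bag
deriving DecidableEq

/-- An architecture: a finite set of processes, a finite set of data structures
(each a stack, queue, or bag), with writer and reader processes; stacks are
written and read by the same process. -/
structure Architecture where
  Procs : Type
  DS : Type
  procsFintype : Fintype Procs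
  dsFintype : Fintype DS
  procsDecEq : DecidableEq Procs
  dsDecEq : DecidableEq DS
  kind : DS → DSKind
  Writer : DS → Procs
  Reader : DS → Procs
  stack_wr : ∀ d, kind d = DSKind.stack → Writer d = Reader d

attribute [instance] Architecture.procsFintype Architecture.dsFintype
  Architecture.procsDecEq Architecture.dsDecEq

/-- Potential events: a process together with a (1-based) position. -/
abbrev Architecture.Event (A : Architecture) : Type := A.Procs × ℕ

/-- The data of a CBM: one word per process and one matching relation per
data structure (on potential events). -/
structure PreCBM (A : Architecture) (Alph : Type) where
  word : A.Procs → List Alph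
  mrel : A.DS → A.Event → A.Event → Prop

namespace PreCBM

variable {A : Architecture} {Alph : Type}

/-- `(p,i)` is an event iff `1 ≤ i ≤ |w_p|`. -/
def isEvent (M : PreCBM A Alph) (e : A.Event) : Prop :=
  1 ≤ e.2 ∧ e.2 ≤ (M.word e.1).length

/-- The set of events of `M`. -/
def events (M : PreCBM A Alph) : Set A.Event := {e | M.isEvent e}

/-- The label of event `(p,i)` is the `i`-th letter of `w_p`. -/
def label (M : PreCBM A Alph) (e : A.Event) : Option Alph :=
  (M.word e.1)[e.2 - 1]?

/-- Process-successor relation `(p,i) → (p,i+1)`. -/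
def procSucc (M : PreCBM A Alph) (e f : A.Event) : Prop :=
  M.isEvent e ∧ M.isEvent f ∧ f.1 = e.1 ∧ f.2 = e.2 + 1

/-- `e ▷ f` for some data structure. -/
def mat (M : PreCBM A Alph) (e f : A.Event) : Prop := ∃ d, M.mrel d e f

def step (M : PreCBM A Alph) (e f : A.Event) : Prop := M.procSucc e f ∨ M.mat e f

/-- The causal order `< = (→ ∪ ▷)⁺`. -/
def lt (M : PreCBM A Alph) : A.Event → A.Event → Prop := Relation.TransGen M.step

/-- An event is internal if it is not the endpoint of any matching edge. -/
def isInternal (M : PreCBM A Alph) (e : A.Event) : Prop :=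
  ¬ ∃ d f, M.mrel d e f ∨ M.mrel d f e

/-- The CBM axioms. -/
structure IsCBM (M : PreCBM A Alph) : Prop where
  mrel_valid : ∀ d e f, M.mrel d e f →
    M.isEvent e ∧ M.isEvent f ∧ e.1 = A.Writer d ∧ f.1 = A.Reader d
  disjoint : ∀ d d' e f e' f', M.mrel d e f → M.mrel d' e' f' →
    ¬ (d = d' ∧ e = e' ∧ f = f') → e ≠ e' ∧ e ≠ f' ∧ f ≠ e' ∧ f ≠ f'
  irrefl : ∀ e, ¬ M.lt e e
  lifo : ∀ d, A.kind d = DSKind.stack → ∀ e₁ f₁ e₂ f₂,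
    M.mrel d e₁ f₁ → M.mrel d e₂ f₂ → M.lt e₁ e₂ → M.lt e₂ f₁ → M.lt f₂ f₁
  fifo : ∀ d, A.kind d = DSKind.queue → ∀ e₁ f₁ e₂ f₂,
    M.mrel d e₁ f₁ → M.mrel d e₂ f₂ → M.lt e₁ e₂ → M.lt f₁ f₂

end PreCBM

/-- Concurrent behaviors with matching over `(A, Alph)`. -/
def CBM (A : Architecture) (Alph : Type) : Type := {M : PreCBM A Alph // M.IsCBM}
/-! ### Systems of concurrent processes with data structures (CPDS) -/

/-- A CPDS over an architecture `A` and alphabet `Alph`. -/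
structure CPDS (A : Architecture) (Alph : Type) where
  Locs : Type
  Val : Type
  locsFintype : Fintype Locs
  valFintype : Fintype Val
  locsNonempty : Nonempty Locs
  valNonempty : Nonempty Val
  internal : A.Procs → Locs → Alph → Locs → Prop
  write : A.Procs → Locs → Alph → A.DS → Val → Locs → Prop
  read : A.Procs → Locs → Alph → A.DS → Val → Locs → Prop
  write_writer : ∀ p ℓ a d v ℓ', write p ℓ a d v ℓ' → A.Writer d = p
  read_reader : ∀ p ℓ a d v ℓ', read p ℓ a d v ℓ' → A.Reader d = p
  init : Locs
  finals : Set (A.Procs → Locs)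

namespace CPDS

variable {A : Architecture} {Alph : Type}

/-- `ρ⁻(e)`: location before event `e` (`init` if `e` is minimal on its process). -/
def prevLoc (S : CPDS A Alph) (ρ : A.Event → S.Locs) (e : A.Event) : S.Locs :=
  if e.2 ≤ 1 then S.init else ρ (e.1, e.2 - 1)

/-- `ρ` is a run of `S` on `M` (graph semantics). -/
def IsRun (S : CPDS A Alph) (M : PreCBM A Alph) (ρ : A.Event → S.Locs) : Prop :=
  (∀ e, M.isEvent e → M.isInternal e →
    ∃ a, M.label e = some a ∧ S.internal e.1 (S.prevLoc ρ e) a (ρ e)) ∧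
  (∀ d e f, M.mrel d e f → ∃ v a b,
    M.label e = some a ∧ M.label f = some b ∧
    S.write e.1 (S.prevLoc ρ e) a d v (ρ e) ∧
    S.read f.1 (S.prevLoc ρ f) b d v (ρ f))

/-- Location of the last event of process `p` (`init` if it has no event). -/
def lastLoc (S : CPDS A Alph) (M : PreCBM A Alph) (ρ : A.Event → S.Locs)
    (p : A.Procs) : S.Locs :=
  if (M.word p).length = 0 then S.init else ρ (p, (M.word p).length)

/-- `S` accepts `M`: some run reaching a global final location tuple. -/
def AcceptsPre (S : CPDS A Alph) (M : PreCBM A Alph) : Prop :=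
  ∃ ρ : A.Event → S.Locs, S.IsRun M ρ ∧ (fun p => S.lastLoc M ρ p) ∈ S.finals

/-- The graph-semantics language `L(S) ⊆ CBM(A,Alph)`. -/
def lang (S : CPDS A Alph) : Set (CBM A Alph) := {M | S.AcceptsPre M.1}

end CPDS
/-! ### (IC)PDL over CBMs -/

mutual
  /-- State formulas of ICPDL over CBMs. -/
  inductive PdlS (A : Architecture) (Alph : Type) : Type
    | proc (p : A.Procs)
    | letter (a : Alph)
    | or (σ₁ σ₂ : PdlS A Alph)
    | not (σ : PdlS A Alph)
    | diam (π : PdlP A Alph) (σ : PdlS A Alph)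
    | loop (π : PdlP A Alph)
  /-- Path formulas of ICPDL over CBMs. -/
  inductive PdlP (A : Architecture) (Alph : Type) : Type
    | succ
    | mat (d : A.DS)
    | test (σ : PdlS A Alph)
    | plus (π₁ π₂ : PdlP A Alph)
    | comp (π₁ π₂ : PdlP A Alph)
    | star (π : PdlP A Alph)
    | conv (π : PdlP A Alph)
    | inter (π₁ π₂ : PdlP A Alph)
end

/-- Sentences of ICPDL. -/
inductive PdlSentence (A : Architecture) (Alph : Type) : Type
  | ex (σ : PdlS A Alph)
  | or (Φ₁ Φ₂ : PdlSentence A Alph)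
  | not (Φ : PdlSentence A Alph)

section PdlSem

variable {A : Architecture} {Alph : Type}

mutual
  /-- Semantics of state formulas over a CBM. -/
  def pdlSSem (M : PreCBM A Alph) : PdlS A Alph → A.Event → Prop
    | .proc p => fun e => M.isEvent e ∧ e.1 = p
    | .letter a => fun e => M.isEvent e ∧ M.label e = some a
    | .or σ₁ σ₂ => fun e => pdlSSem M σ₁ e ∨ pdlSSem M σ₂ e
    | .not σ => fun e => M.isEvent e ∧ ¬ pdlSSem M σ e
    | .diam π σ => fun e => ∃ f, pdlPSem M π e f ∧ pdlSSem M σ f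
    | .loop π => fun e => pdlPSem M π e e
  /-- Semantics of path formulas over a CBM. -/
  def pdlPSem (M : PreCBM A Alph) : PdlP A Alph → A.Event → A.Event → Prop
    | .succ => fun e f => M.procSucc e f
    | .mat d => fun e f => M.mrel d e f
    | .test σ => fun e f => e = f ∧ pdlSSem M σ e
    | .plus π₁ π₂ => fun e f => pdlPSem M π₁ e f ∨ pdlPSem M π₂ e f
    | .comp π₁ π₂ => fun e f => ∃ g, pdlPSem M π₁ e g ∧ pdlPSem M π₂ g f
    | .star π => fun e f =>
        (M.isEvent e ∧ e = f) ∨ Relation.TransGen (fun u v => pdlPSem M π u v) e f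
    | .conv π => fun e f => pdlPSem M π f e
    | .inter π₁ π₂ => fun e f => pdlPSem M π₁ e f ∧ pdlPSem M π₂ e f
end

/-- Semantics of sentences over a CBM. -/
def pdlSentSem (M : PreCBM A Alph) : PdlSentence A Alph → Prop
  | .ex σ => ∃ e, M.isEvent e ∧ pdlSSem M σ e
  | .or Φ₁ Φ₂ => pdlSentSem M Φ₁ ∨ pdlSentSem M Φ₂
  | .not Φ => ¬ pdlSentSem M Φ

end PdlSem

/-- `L_cbm(Φ)`: the CBMs satisfying `Φ`. -/
def pdlLang (A : Architecture) (Alph : Type) (Φ : PdlSentence A Alph) :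
    Set (CBM A Alph) := {M | pdlSentSem M.1 Φ}

section PdlFrag

variable {A : Architecture} {Alph : Type}

mutual
  /-- No intersection of path formulas (LCPDL and below). -/
  def PdlS.NoInter : PdlS A Alph → Prop
    | .proc _ => True
    | .letter _ => True
    | .or σ₁ σ₂ => σ₁.NoInter ∧ σ₂.NoInter
    | .not σ => σ.NoInter
    | .diam π σ => π.NoInter ∧ σ.NoInter
    | .loop π => π.NoInter
  def PdlP.NoInter : PdlP A Alph → Prop
    | .succ => True
    | .mat _ => True
    | .test σ => σ.NoInter
    | .plus π₁ π₂ => π₁.NoInter ∧ π₂.NoInter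
    | .comp π₁ π₂ => π₁.NoInter ∧ π₂.NoInter
    | .star π => π.NoInter
    | .conv π => π.NoInter
    | .inter _ _ => False
end

mutual
  /-- No converse and no loop (IPDL and below). -/
  def PdlS.NoConvLoop : PdlS A Alph → Prop
    | .proc _ => True
    | .letter _ => True
    | .or σ₁ σ₂ => σ₁.NoConvLoop ∧ σ₂.NoConvLoop
    | .not σ => σ.NoConvLoop
    | .diam π σ => π.NoConvLoop ∧ σ.NoConvLoop
    | .loop _ => False
  def PdlP.NoConvLoop : PdlP A Alph → Prop
    | .succ => True
    | .mat _ => True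
    | .test σ => σ.NoConvLoop
    | .plus π₁ π₂ => π₁.NoConvLoop ∧ π₂.NoConvLoop
    | .comp π₁ π₂ => π₁.NoConvLoop ∧ π₂.NoConvLoop
    | .star π => π.NoConvLoop
    | .conv _ => False
    | .inter π₁ π₂ => π₁.NoConvLoop ∧ π₂.NoConvLoop
end

def PdlSentence.NoInter : PdlSentence A Alph → Prop
  | .ex σ => σ.NoInter
  | .or Φ₁ Φ₂ => Φ₁.NoInter ∧ Φ₂.NoInter
  | .not Φ => Φ.NoInter

def PdlSentence.NoConvLoop : PdlSentence A Alph → Prop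
  | .ex σ => σ.NoConvLoop
  | .or Φ₁ Φ₂ => Φ₁.NoConvLoop ∧ Φ₂.NoConvLoop
  | .not Φ => Φ.NoConvLoop

end PdlFrag

/-! ### Proof: backward deterministic transducers -/

namespace PdlProof

variable {A : Architecture} {Alph : Type}

open Classical in
/-- The process successor of an event, if any. -/
noncomputable def nextOf (M : PreCBM A Alph) (e : A.Event) : Option A.Event :=
  if M.isEvent (e.1, e.2 + 1) then some (e.1, e.2 + 1) else none

open Classical in
/-- The matching target of an event, if any. -/
noncomputable def matOf (M : PreCBM A Alph) (e : A.Event) : Option (A.DS × A.Event) :=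
  if h : ∃ s : A.DS × A.Event, M.mrel s.1 e s.2 then some h.choose else none

theorem nextOf_some {M : PreCBM A Alph} {e f : A.Event} (he : M.isEvent e) :
    nextOf M e = some f ↔ M.procSucc e f := by
  unfold nextOf PreCBM.procSucc
  obtain ⟨p, i⟩ := e
  obtain ⟨p', j⟩ := f
  split_ifs with h
  · constructor
    · intro h'
      simp only [Option.some.injEq, Prod.mk.injEq] at h'
      obtain ⟨rfl, rfl⟩ := h'
      exact ⟨he, h, rfl, rfl⟩
    · rintro ⟨_, _, h1, h2⟩
      simp only at h1 h2
      subst h1; subst h2; rfl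
  · constructor
    · intro h'; cases h'
    · rintro ⟨_, h0, h1, h2⟩
      simp only at h1 h2
      subst h1; subst h2; exact absurd h0 h

theorem step_event {M : PreCBM A Alph} (hM : M.IsCBM) {e f : A.Event} (h : M.step e f) :
    M.isEvent e ∧ M.isEvent f := by
  rcases h with h | ⟨d, h⟩
  · exact ⟨h.1, h.2.1⟩
  · exact ⟨(hM.mrel_valid _ _ _ h).1, (hM.mrel_valid _ _ _ h).2.1⟩

theorem rtg_event {M : PreCBM A Alph} (hM : M.IsCBM) {e f : A.Event}
    (h : Relation.ReflTransGen M.step e f) (he : M.isEvent e) : M.isEvent f := by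
  induction h with
  | refl => exact he
  | tail _ h _ => exact (step_event hM h).2

theorem mrel_unique {M : PreCBM A Alph} (hM : M.IsCBM) {d d' : A.DS} {e f f' : A.Event}
    (h : M.mrel d e f) (h' : M.mrel d' e f') : d = d' ∧ f = f' := by
  by_contra hc
  exact (hM.disjoint _ _ _ _ _ _ h h' (fun ⟨a, _, c⟩ => hc ⟨a, c⟩)).1 rfl

theorem matOf_some {M : PreCBM A Alph} (hM : M.IsCBM) {e : A.Event} {s : A.DS × A.Event} :
    matOf M e = some s ↔ M.mrel s.1 e s.2 := by
  unfold matOf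
  split_ifs with h
  · constructor
    · intro h'
      cases h'
      exact h.choose_spec
    · intro h'
      obtain ⟨h1, h2⟩ := mrel_unique hM h.choose_spec h'
      rw [Option.some.injEq]
      exact Prod.ext h1 h2
  · constructor
    · intro h'; cases h'
    · intro h'; exact absurd ⟨s, h'⟩ h

theorem matOf_none {M : PreCBM A Alph} {e : A.Event} (h : ∀ d f, ¬ M.mrel d e f) :
    matOf M e = none := by
  unfold matOf
  rw [dif_neg]
  rintro ⟨s, hs⟩
  exact h _ _ hs

theorem step_of_next {M : PreCBM A Alph} {e f : A.Event} (he : M.isEvent e)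
    (h : nextOf M e = some f) : M.step e f := Or.inl ((nextOf_some he).1 h)

theorem step_of_mat {M : PreCBM A Alph} (hM : M.IsCBM) {e : A.Event} {s : A.DS × A.Event}
    (h : matOf M e = some s) : M.step e s.2 := Or.inr ⟨s.1, (matOf_some hM).1 h⟩

/-- Causal order is well-founded upwards. -/
theorem wf_step {M : PreCBM A Alph} (hM : M.IsCBM) :
    WellFounded (fun f e : A.Event => M.lt e f) := by
  have hfin : Set.Finite {e : A.Event | M.isEvent e} := by
    apply Set.Finite.subset
      (Set.finite_iUnion (fun p : A.Procs =>
        (Set.finite_Icc 1 (M.word p).length).image (fun i => ((p, i) : A.Event))))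
    rintro ⟨p, i⟩ h
    exact Set.mem_iUnion.2 ⟨p, i, ⟨h.1, h.2⟩, rfl⟩
  have htr : IsTrans A.Event (fun f e : A.Event => M.lt e f) :=
    ⟨fun a b c h1 h2 => Relation.TransGen.trans h2 h1⟩
  have hir : Std.Irrefl (fun f e : A.Event => M.lt e f) := ⟨hM.irrefl⟩
  have hso : IsStrictOrder A.Event (fun f e : A.Event => M.lt e f) := {}
  have hwo := hfin.wellFoundedOn (r := fun f e : A.Event => M.lt e f)
  rw [Set.wellFoundedOn_iff] at hwo
  refine Subrelation.wf ?_ hwo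
  intro f e h
  refine ⟨h, ?_, ?_⟩
  · obtain ⟨c, _, hc⟩ := Relation.TransGen.tail'_iff.1 h
    exact (step_event hM hc).2
  · obtain ⟨c, hc, _⟩ := Relation.TransGen.head'_iff.1 h
    exact (step_event hM hc).1

/-- Backward deterministic transducers with a propositional input. -/
structure Tr (A : Architecture) (Alph : Type) where
  Q : Type
  fin : Finite Q
  δ : A.Procs → Option Alph → Prop → Option Q → Option (A.DS × Q) → Q
  out : Q → Prop

/-- Local consistency of a labelling at an event. -/
def LabAt (T : Tr A Alph) (M : PreCBM A Alph) (X : A.Event → Prop) (q : A.Event → T.Q)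
    (f : A.Event) : Prop :=
  q f = T.δ f.1 (M.label f) (X f) ((nextOf M f).map q)
    ((matOf M f).map (fun s => (s.1, q s.2)))

abbrev Trf (A : Architecture) (Alph : Type) :=
  PreCBM A Alph → (A.Event → Prop) → A.Event → Prop

def Correct (T : Tr A Alph) (F : Trf A Alph) : Prop :=
  ∀ M : PreCBM A Alph, M.IsCBM → ∀ X (q : A.Event → T.Q) e, M.isEvent e →
    (∀ f, Relation.ReflTransGen M.step e f → LabAt T M X q f) → (T.out (q e) ↔ F M X e)

def Rec (F : Trf A Alph) : Prop := ∃ T : Tr A Alph, Correct T F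

theorem exists_lab (T : Tr A Alph) {M : PreCBM A Alph} (hM : M.IsCBM) (X : A.Event → Prop) :
    ∃ q : A.Event → T.Q, ∀ e, M.isEvent e → LabAt T M X q e := by
  classical
  let G : ∀ e : A.Event, (∀ f, M.lt e f → T.Q) → T.Q := fun e ih =>
    T.δ e.1 (M.label e) (X e)
      ((nextOf M e).map fun f => if h : M.lt e f then ih f h else T.δ e.1 none True none none)
      ((matOf M e).map fun s =>
        (s.1, if h : M.lt e s.2 then ih s.2 h else T.δ e.1 none True none none))
  refine ⟨(wf_step hM).fix G, fun e he => ?_⟩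
  unfold LabAt
  rw [WellFounded.fix_eq]
  simp only [G]
  congr 1
  · cases hn : nextOf M e with
    | none => rfl
    | some f =>
      have : M.lt e f := Relation.TransGen.single (step_of_next he hn)
      simp [this]
  · cases hn : matOf M e with
    | none => rfl
    | some s =>
      have : M.lt e s.2 := Relation.TransGen.single (step_of_mat hM hn)
      simp [this]

theorem Rec.congr {F F' : Trf A Alph} (h : Rec F)
    (hF : ∀ M : PreCBM A Alph, M.IsCBM → ∀ X e, M.isEvent e → (F M X e ↔ F' M X e)) :
    Rec F' := by
  obtain ⟨T, hT⟩ := h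
  exact ⟨T, fun M hM X q e he hq => (hT M hM X q e he hq).trans (hF M hM X e he)⟩

theorem rec_id : Rec (fun (_ : PreCBM A Alph) X e => X e) :=
  ⟨⟨Prop, inferInstance, fun _ _ x _ _ => x, id⟩, fun M _ X q e _ hq => by
    have := hq e .refl
    simp only [LabAt] at this
    simp [this]⟩

theorem rec_loc (g : A.Procs → Option Alph → Prop) :
    Rec (fun (M : PreCBM A Alph) _ e => g e.1 (M.label e)) :=
  ⟨⟨Prop, inferInstance, fun p a _ _ _ => g p a, id⟩, fun M _ X q e _ hq => by
    have := hq e .refl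
    simp only [LabAt] at this
    simp [this]⟩

theorem Rec.bin (op : Prop → Prop → Prop) {F G : Trf A Alph} (hF : Rec F) (hG : Rec G) :
    Rec (fun M X e => op (F M X e) (G M X e)) := by
  obtain ⟨T, hT⟩ := hF
  obtain ⟨U, hU⟩ := hG
  have := T.fin
  have := U.fin
  refine ⟨⟨T.Q × U.Q, inferInstance, fun p a x n m =>
    (T.δ p a x (n.map Prod.fst) (m.map fun s => (s.1, s.2.1)),
     U.δ p a x (n.map Prod.snd) (m.map fun s => (s.1, s.2.2))),
    fun s => op (T.out s.1) (U.out s.2)⟩, fun M hM X q e he hq => ?_⟩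
  have h1 := hT M hM X (fun e => (q e).1) e he (fun f hf => by
    have := congrArg Prod.fst (hq f hf)
    simpa [LabAt, Option.map_map, Function.comp_def] using this)
  have h2 := hU M hM X (fun e => (q e).2) e he (fun f hf => by
    have := congrArg Prod.snd (hq f hf)
    simpa [LabAt, Option.map_map, Function.comp_def] using this)
  simp only at h1 h2 ⊢
  rw [propext h1, propext h2]

theorem Rec.comp {F G : Trf A Alph} (hF : Rec F) (hG : Rec G) :
    Rec (fun M X e => F M (G M X) e) := by
  obtain ⟨T, hT⟩ := hF
  obtain ⟨U, hU⟩ := hG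
  have := T.fin
  have := U.fin
  refine ⟨⟨T.Q × U.Q, inferInstance, fun p a x n m =>
    (T.δ p a (U.out (U.δ p a x (n.map Prod.snd) (m.map fun s => (s.1, s.2.2))))
      (n.map Prod.fst) (m.map fun s => (s.1, s.2.1)),
     U.δ p a x (n.map Prod.snd) (m.map fun s => (s.1, s.2.2))),
    fun s => T.out s.1⟩, fun M hM X q e he hq => ?_⟩
  have hl : ∀ f, Relation.ReflTransGen M.step e f → LabAt U M X (fun e => (q e).2) f := by
    intro f hf
    have := congrArg Prod.snd (hq f hf)
    simpa [LabAt, Option.map_map, Function.comp_def] using this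
  refine hT M hM (G M X) (fun e => (q e).1) e he (fun f hf => ?_)
  have h2 := hU M hM X (fun e => (q e).2) f (rtg_event hM hf he)
    (fun g hg => hl g (hf.trans hg))
  have h3 := hl f hf
  have := congrArg Prod.fst (hq f hf)
  unfold LabAt at h3 ⊢
  rw [← propext h2]
  simp only at h3
  rw [h3]
  simpa [Option.map_map, Function.comp_def] using this

theorem rec_succ :
    Rec (fun (M : PreCBM A Alph) X e => ∃ f, M.procSucc e f ∧ X f) := by
  refine ⟨⟨Prop × Prop, inferInstance, fun _ _ x n _ => (x, ∃ s, n = some s ∧ s.1), Prod.snd⟩,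
    fun M hM X q e he hq => ?_⟩
  have h0 := congrArg Prod.snd (hq e .refl)
  simp only at h0
  simp only [h0, Option.map_eq_some_iff]
  constructor
  · rintro ⟨s, ⟨f, hf, rfl⟩, hs⟩
    have hst := step_of_next he hf
    have := congrArg Prod.fst (hq f (.single hst))
    simp only at this
    exact ⟨f, (nextOf_some he).1 hf, this ▸ hs⟩
  · rintro ⟨f, hf, hX⟩
    have := congrArg Prod.fst (hq f (.single (Or.inl hf)))
    simp only at this
    exact ⟨_, ⟨f, (nextOf_some he).2 hf, rfl⟩, this ▸ hX⟩

theorem rec_mat (d : A.DS) :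
    Rec (fun (M : PreCBM A Alph) X e => ∃ f, M.mrel d e f ∧ X f) := by
  refine ⟨⟨Prop × Prop, inferInstance, fun _ _ x _ m => (x, ∃ s, m = some (d, s) ∧ s.1), Prod.snd⟩,
    fun M hM X q e he hq => ?_⟩
  have h0 := congrArg Prod.snd (hq e .refl)
  simp only at h0
  simp only [h0, Option.map_eq_some_iff]
  constructor
  · rintro ⟨s, ⟨⟨d', f⟩, hf, heq⟩, hs⟩
    simp only [Prod.mk.injEq] at heq
    obtain ⟨rfl, rfl⟩ := heq
    have hst := step_of_mat hM hf
    have := congrArg Prod.fst (hq f (.single hst))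
    simp only at this
    exact ⟨f, (matOf_some hM).1 hf, this ▸ hs⟩
  · rintro ⟨f, hf, hX⟩
    have := congrArg Prod.fst (hq f (.single (Or.inr ⟨d, hf⟩)))
    simp only at this
    exact ⟨_, ⟨(d, f), (matOf_some hM).2 hf, rfl⟩, this ▸ hX⟩

theorem rec_star (R : PreCBM A Alph → A.Event → A.Event → Prop)
    (hR : ∀ M : PreCBM A Alph, M.IsCBM → ∀ e f, R M e f → Relation.ReflTransGen M.step e f)
    (h : Rec (fun M X e => ∃ f, R M e f ∧ X f)) :
    Rec (fun M X e => ∃ f, Relation.ReflTransGen (R M) e f ∧ X f) := by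
  classical
  obtain ⟨T, hT⟩ := h
  have := T.fin
  refine ⟨⟨Prop × T.Q, inferInstance, fun p a x n m =>
    (x ∨ T.out (T.δ p a False (n.map Prod.snd) (m.map fun s => (s.1, s.2.2))),
     T.δ p a (x ∨ T.out (T.δ p a False (n.map Prod.snd) (m.map fun s => (s.1, s.2.2))))
       (n.map Prod.snd) (m.map fun s => (s.1, s.2.2))),
    Prod.fst⟩, fun M hM X q e he hq => ?_⟩
  have hl : ∀ f, Relation.ReflTransGen M.step e f →
      LabAt T M (fun g => (q g).1) (fun g => (q g).2) f := by
    intro f hf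
    have h1 := congrArg Prod.fst (hq f hf)
    have h2 := congrArg Prod.snd (hq f hf)
    simp only at h1 h2
    unfold LabAt
    simp only [h1]
    simpa [Option.map_map, Function.comp_def] using h2
  have key : ∀ f, Relation.ReflTransGen M.step e f →
      ((q f).1 ↔ X f ∨ ∃ g, R M f g ∧ (g ≠ f ∧ (q g).1)) := by
    intro f hf
    have hfe := rtg_event hM hf he
    have hne : ∀ g g', Relation.ReflTransGen M.step f g → M.step g g' → g' ≠ f := by
      rintro g g' h1 h2 rfl
      exact hM.irrefl _ (Relation.TransGen.tail' h1 h2)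
    let q' : A.Event → T.Q := Function.update (fun g => (q g).2) f
      (T.δ f.1 (M.label f) False ((nextOf M f).map fun g => (q g).2)
        ((matOf M f).map fun s => (s.1, (q s.2).2)))
    have hmap : ∀ g, Relation.ReflTransGen M.step f g →
        (nextOf M g).map q' = (nextOf M g).map (fun g => (q g).2) ∧
        (matOf M g).map (fun s => (s.1, q' s.2)) =
          (matOf M g).map (fun s => (s.1, (q s.2).2)) := by
      intro g hg
      constructor
      · cases hn : nextOf M g with
        | none => rfl
        | some g' =>
          have := hne g g' hg (step_of_next (rtg_event hM hg hfe) hn)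
          simp [q', Function.update_of_ne this]
      · cases hn : matOf M g with
        | none => rfl
        | some s =>
          have := hne g s.2 hg (step_of_mat hM hn)
          simp [q', Function.update_of_ne this]
    have h1 := congrArg Prod.fst (hq f hf)
    simp only at h1
    have h3 := hT M hM (fun g => g ≠ f ∧ (q g).1) q' f hfe (fun g hg => by
      unfold LabAt
      rw [(hmap g hg).1, (hmap g hg).2]
      by_cases hgf : g = f
      · subst hgf
        simp [q']
      · have := hl g (hf.trans hg)
        unfold LabAt at this
        simp only [q', Function.update_of_ne hgf]
        refine this.trans ?_
        simp [hgf])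
    simp only at h3
    rw [h1, ← h3]
    simp [q', Option.map_map, Function.comp_def]
  have sound : ∀ f, Relation.ReflTransGen M.step e f → (q f).1 →
      ∃ g, Relation.ReflTransGen (R M) f g ∧ X g := by
    intro f
    induction f using (wf_step hM).induction with
    | _ f ih =>
    intro hf hy
    rcases (key f hf).1 hy with h | ⟨g, h1, h2, h3⟩
    · exact ⟨f, .refl, h⟩
    · have hfg := hR M hM _ _ h1
      have hlt : M.lt f g := by
        rcases Relation.reflTransGen_iff_eq_or_transGen.1 hfg with h | h
        · exact absurd h h2
        · exact h
      obtain ⟨k, hk, hX⟩ := ih g hlt (hf.trans hfg) h3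
      exact ⟨k, .head h1 hk, hX⟩
  constructor
  · exact sound e .refl
  · rintro ⟨g, hg, hX⟩
    have : ∀ f, Relation.ReflTransGen (R M) f g → Relation.ReflTransGen M.step e f →
        (q f).1 := by
      intro f hfg
      induction hfg using Relation.ReflTransGen.head_induction_on with
      | refl => exact fun h => (key g h).2 (Or.inl hX)
      | head h1 h2 ih =>
        rename_i a c
        intro ha
        have hc := ih (ha.trans (hR M hM _ _ h1))
        by_cases hca : c = a
        · exact hca ▸ hc
        · exact (key a ha).2 (Or.inr ⟨c, h1, hca, hc⟩)
    exact this e hg .refl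

theorem path_le (M : PreCBM A Alph) : ∀ (π : PdlP A Alph), π.NoInter → π.NoConvLoop →
    ∀ e f, pdlPSem M π e f → Relation.ReflTransGen M.step e f
  | .succ, _, _, e, f, h => .single (Or.inl (by simpa [pdlPSem] using h))
  | .mat d, _, _, e, f, h => .single (Or.inr ⟨d, by simpa [pdlPSem] using h⟩)
  | .test σ, _, _, e, f, h => by
      simp only [pdlPSem] at h
      rw [h.1]
  | .plus π₁ π₂, h1, h2, e, f, h => by
      simp only [pdlPSem, PdlP.NoInter, PdlP.NoConvLoop] at h h1 h2
      rcases h with h | h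
      · exact path_le M π₁ h1.1 h2.1 e f h
      · exact path_le M π₂ h1.2 h2.2 e f h
  | .comp π₁ π₂, h1, h2, e, f, h => by
      simp only [pdlPSem, PdlP.NoInter, PdlP.NoConvLoop] at h h1 h2
      obtain ⟨g, ha, hb⟩ := h
      exact (path_le M π₁ h1.1 h2.1 e g ha).trans (path_le M π₂ h1.2 h2.2 g f hb)
  | .star π, h1, h2, e, f, h => by
      simp only [pdlPSem, PdlP.NoInter, PdlP.NoConvLoop] at h h1 h2
      rcases h with h | h
      · rw [h.2]
      · induction h with
        | single h => exact path_le M π h1 h2 _ _ h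
        | tail _ h ih => exact ih.trans (path_le M π h1 h2 _ _ h)
  | .conv π, _, h2, e, f, h => by simp [PdlP.NoConvLoop] at h2
  | .inter _ _, h1, _, e, f, h => by simp [PdlP.NoInter] at h1

mutual
theorem recS : ∀ (σ : PdlS A Alph), σ.NoInter → σ.NoConvLoop →
    Rec (fun (M : PreCBM A Alph) _ e => pdlSSem M σ e)
  | .proc p, _, _ => (rec_loc (fun p' _ => p' = p)).congr
      (fun M _ X e he => by simp [pdlSSem, he])
  | .letter a, _, _ => (rec_loc (fun _ a' => a' = some a)).congr
      (fun M _ X e he => by simp [pdlSSem, he])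
  | .or σ₁ σ₂, h1, h2 => by
      simp only [PdlS.NoInter, PdlS.NoConvLoop] at h1 h2
      exact ((recS σ₁ h1.1 h2.1).bin Or (recS σ₂ h1.2 h2.2)).congr
        (fun M _ X e he => by simp [pdlSSem])
  | .not σ, h1, h2 => by
      simp only [PdlS.NoInter, PdlS.NoConvLoop] at h1 h2
      exact ((recS σ h1 h2).bin (fun a _ => ¬ a) (recS σ h1 h2)).congr
        (fun M _ X e he => by simp [pdlSSem, he])
  | .diam π σ, h1, h2 => by
      simp only [PdlS.NoInter, PdlS.NoConvLoop] at h1 h2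
      exact ((recP π h1.1 h2.1).comp (recS σ h1.2 h2.2)).congr
        (fun M _ X e he => by simp [pdlSSem])
  | .loop π, _, h2 => by simp [PdlS.NoConvLoop] at h2
theorem recP : ∀ (π : PdlP A Alph), π.NoInter → π.NoConvLoop →
    Rec (fun (M : PreCBM A Alph) X e => ∃ f, pdlPSem M π e f ∧ X f)
  | .succ, _, _ => rec_succ.congr (fun M _ X e he => by simp [pdlPSem])
  | .mat d, _, _ => (rec_mat d).congr (fun M _ X e he => by simp [pdlPSem])
  | .test σ, h1, h2 => by
      simp only [PdlP.NoInter, PdlP.NoConvLoop] at h1 h2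
      exact ((recS σ h1 h2).bin And rec_id).congr
        (fun M _ X e he => by
          simp only [pdlPSem]
          constructor
          · rintro ⟨a, b⟩; exact ⟨e, ⟨rfl, a⟩, b⟩
          · rintro ⟨f, ⟨rfl, a⟩, b⟩; exact ⟨a, b⟩)
  | .plus π₁ π₂, h1, h2 => by
      simp only [PdlP.NoInter, PdlP.NoConvLoop] at h1 h2
      exact ((recP π₁ h1.1 h2.1).bin Or (recP π₂ h1.2 h2.2)).congr
        (fun M _ X e he => by
          simp only [pdlPSem, or_and_right, exists_or])
  | .comp π₁ π₂, h1, h2 => by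
      simp only [PdlP.NoInter, PdlP.NoConvLoop] at h1 h2
      exact ((recP π₁ h1.1 h2.1).comp (recP π₂ h1.2 h2.2)).congr
        (fun M _ X e he => by
          simp only [pdlPSem]
          constructor
          · rintro ⟨g, a, f, b, c⟩; exact ⟨f, ⟨g, a, b⟩, c⟩
          · rintro ⟨f, ⟨g, a, b⟩, c⟩; exact ⟨g, a, f, b, c⟩)
  | .star π, h1, h2 => by
      simp only [PdlP.NoInter, PdlP.NoConvLoop] at h1 h2
      exact (rec_star (fun M => pdlPSem M π) (fun M _ => path_le M π h1 h2)
        (recP π h1 h2)).congr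
        (fun M _ X e he => by
          simp only [pdlPSem, he, true_and, Relation.reflTransGen_iff_eq_or_transGen,
            eq_comm (a := e)])
  | .conv π, _, h2 => by simp [PdlP.NoConvLoop] at h2
  | .inter _ _, h1, _ => by simp [PdlP.NoInter] at h1
end

/-- The set of labels visited. -/
def visited {Q : Type} (M : PreCBM A Alph) (q : A.Event → Q) : Set Q :=
  {s | ∃ e, M.isEvent e ∧ q e = s}

def SCorrect (T : Tr A Alph) (G : Set T.Q → Prop) (Φ : PdlSentence A Alph) : Prop :=
  ∀ M : PreCBM A Alph, M.IsCBM → ∀ q : A.Event → T.Q,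
    (∀ e, M.isEvent e → LabAt T M (fun _ => False) q e) →
    (G (visited M q) ↔ pdlSentSem M Φ)

theorem recSent : ∀ (Φ : PdlSentence A Alph), Φ.NoInter → Φ.NoConvLoop →
    ∃ (T : Tr A Alph) (G : Set T.Q → Prop), SCorrect T G Φ
  | .ex σ, h1, h2 => by
      obtain ⟨T, hT⟩ := recS σ h1 h2
      refine ⟨T, fun V => ∃ s ∈ V, T.out s, fun M hM q hq => ?_⟩
      have : ∀ e, M.isEvent e → (T.out (q e) ↔ pdlSSem M σ e) := fun e he =>
        hT M hM _ q e he (fun f hf => hq f (rtg_event hM hf he))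
      simp only [pdlSentSem, visited]
      constructor
      · rintro ⟨_, ⟨e, he, rfl⟩, ho⟩
        exact ⟨e, he, (this e he).1 ho⟩
      · rintro ⟨e, he, ho⟩
        exact ⟨_, ⟨e, he, rfl⟩, (this e he).2 ho⟩
  | .or Φ₁ Φ₂, h1, h2 => by
      obtain ⟨T, G, hT⟩ := recSent Φ₁ h1.1 h2.1
      obtain ⟨U, H, hU⟩ := recSent Φ₂ h1.2 h2.2
      have := T.fin
      have := U.fin
      refine ⟨⟨T.Q × U.Q, inferInstance, fun p a x n m =>
        (T.δ p a x (n.map Prod.fst) (m.map fun s => (s.1, s.2.1)),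
         U.δ p a x (n.map Prod.snd) (m.map fun s => (s.1, s.2.2))),
        fun _ => True⟩, fun V => G (Prod.fst '' V) ∨ H (Prod.snd '' V),
        fun M hM q hq => ?_⟩
      have h1 := hT M hM (fun e => (q e).1) (fun f hf => by
        have := congrArg Prod.fst (hq f hf)
        simpa [LabAt, Option.map_map, Function.comp_def] using this)
      have h2 := hU M hM (fun e => (q e).2) (fun f hf => by
        have := congrArg Prod.snd (hq f hf)
        simpa [LabAt, Option.map_map, Function.comp_def] using this)
      have e1 : Prod.fst '' visited M q = visited M (fun e => (q e).1) := by
        ext s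
        constructor
        · rintro ⟨_, ⟨e, he, rfl⟩, rfl⟩; exact ⟨e, he, rfl⟩
        · rintro ⟨e, he, rfl⟩; exact ⟨_, ⟨e, he, rfl⟩, rfl⟩
      have e2 : Prod.snd '' visited M q = visited M (fun e => (q e).2) := by
        ext s
        constructor
        · rintro ⟨_, ⟨e, he, rfl⟩, rfl⟩; exact ⟨e, he, rfl⟩
        · rintro ⟨e, he, rfl⟩; exact ⟨_, ⟨e, he, rfl⟩, rfl⟩
      simp only [pdlSentSem]
      rw [e1, e2, h1, h2]
  | .not Φ, h1, h2 => by
      obtain ⟨T, G, hT⟩ := recSent Φ h1 h2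
      exact ⟨T, fun V => ¬ G V, fun M hM q hq => by
        simp only [pdlSentSem]
        rw [hT M hM q hq]⟩

/-- Transition constraint: previous location, current label, new location. -/
def Tran (T : Tr A Alph) (p : A.Procs) (l : Option (T.Q × Option T.Q × Set T.Q)) (a : Alph)
    (mt : Option (A.DS × T.Q)) (l' : Option (T.Q × Option T.Q × Set T.Q)) : Prop :=
  ∃ s nx V, l' = some (s, nx, V) ∧ s = T.δ p (some a) False nx mt ∧
    ((l = none ∧ V = {s}) ∨ ∃ s₀ V₀, l = some (s₀, some s, V₀) ∧ V = V₀ ∪ {s})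

/-- The CPDS of a transducer. -/
noncomputable def sys (T : Tr A Alph) (G : Set T.Q → Prop) : CPDS A Alph where
  Locs := Option (T.Q × Option T.Q × Set T.Q)
  Val := Option T.Q
  locsFintype := by
    have := T.fin
    exact Fintype.ofFinite _
  valFintype := by
    have := T.fin
    exact Fintype.ofFinite _
  locsNonempty := ⟨none⟩
  valNonempty := ⟨none⟩
  internal p l a l' := Tran T p l a none l'
  write p l a d v l' := A.Writer d = p ∧ ∃ s, v = some s ∧ Tran T p l a (some (d, s)) l'
  read p l a d v l' := A.Reader d = p ∧ Tran T p l a none l' ∧ v = l'.map (fun x => x.1)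
  write_writer := fun _ _ _ _ _ _ h => h.1
  read_reader := fun _ _ _ _ _ _ h => h.1
  init := none
  finals := {t | (∀ p s nx V, t p = some (s, nx, V) → nx = none) ∧
    G {s | ∃ p s₀ nx V, t p = some (s₀, nx, V) ∧ s ∈ V}}

theorem label_some {M : PreCBM A Alph} {e : A.Event} (he : M.isEvent e) :
    ∃ a, M.label e = some a := by
  obtain ⟨h1, h2⟩ := he
  exact ⟨(M.word e.1)[e.2 - 1]'(by omega), by
    unfold PreCBM.label
    exact List.getElem?_eq_getElem _⟩

theorem reader_none {M : PreCBM A Alph} (hM : M.IsCBM) {d : A.DS} {e f : A.Event}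
    (h : M.mrel d e f) : matOf M f = none := by
  apply matOf_none
  intro d' f' h'
  by_cases hc : d = d' ∧ e = f ∧ f = f'
  · obtain ⟨rfl, rfl, rfl⟩ := hc
    exact hM.irrefl _ (Relation.TransGen.single (Or.inr ⟨_, h⟩))
  · exact (hM.disjoint _ _ _ _ _ _ h h' hc).2.2.1 rfl

/-- Location of an event in the run built from a labelling. -/
noncomputable def locOf (T : Tr A Alph) (M : PreCBM A Alph) (q : A.Event → T.Q) (e : A.Event) :
    Option (T.Q × Option T.Q × Set T.Q) :=
  some (q e, (nextOf M e).map q, {s | ∃ j, 1 ≤ j ∧ j ≤ e.2 ∧ q (e.1, j) = s})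

theorem tran_locOf (T : Tr A Alph) (G : Set T.Q → Prop) {M : PreCBM A Alph}
    (q : A.Event → T.Q)
    {e : A.Event} (he : M.isEvent e) (hq : LabAt T M (fun _ => False) q e) {a : Alph}
    (ha : M.label e = some a) :
    Tran T e.1 ((sys T G).prevLoc (locOf T M q) e) a
      ((matOf M e).map (fun s => (s.1, q s.2))) (locOf T M q e) := by
  refine ⟨_, _, _, rfl, ?_, ?_⟩
  · rw [← ha]; exact hq
  · obtain ⟨p, i⟩ := e
    obtain ⟨h1, h2⟩ := he
    simp only at h1 h2
    unfold CPDS.prevLoc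
    by_cases hi : i ≤ 1
    · left
      have : i = 1 := by omega
      subst this
      refine ⟨by simp [sys], ?_⟩
      ext s
      simp only [Set.mem_ofPred_eq, Set.mem_singleton_iff]
      constructor
      · rintro ⟨j, hj1, hj2, rfl⟩
        have : j = 1 := by omega
        rw [this]
      · rintro rfl
        exact ⟨1, le_rfl, le_rfl, rfl⟩
    · right
      obtain ⟨k, rfl⟩ : ∃ k, i = k + 1 := ⟨i - 1, by omega⟩
      have hn : nextOf M (p, k) = some (p, k + 1) := by
        unfold nextOf
        rw [if_pos ⟨h1, h2⟩]
      refine ⟨q (p, k), {s | ∃ j, 1 ≤ j ∧ j ≤ k ∧ q (p, j) = s}, ?_, ?_⟩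
      · refine (if_neg hi).trans ?_
        simp [locOf, hn]
      · ext s
        simp only [Set.mem_ofPred_eq, Set.mem_union, Set.mem_singleton_iff]
        constructor
        · rintro ⟨j, hj1, hj2, rfl⟩
          by_cases hjk : j ≤ k
          · exact Or.inl ⟨j, hj1, hjk, rfl⟩
          · have : j = k + 1 := by omega
            rw [this]; exact Or.inr rfl
        · rintro (⟨j, hj1, hj2, rfl⟩ | rfl)
          · exact ⟨j, hj1, by omega, rfl⟩
          · exact ⟨k + 1, h1, le_rfl, rfl⟩

theorem last_zero (T : Tr A Alph) (G : Set T.Q → Prop) (M : PreCBM A Alph)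
    (ρ : A.Event → Option (T.Q × Option T.Q × Set T.Q)) (p : A.Procs)
    (h : (M.word p).length = 0) : (sys T G).lastLoc M ρ p = none := if_pos h

theorem last_pos (T : Tr A Alph) (G : Set T.Q → Prop) (M : PreCBM A Alph)
    (ρ : A.Event → Option (T.Q × Option T.Q × Set T.Q)) (p : A.Procs)
    (h : ¬ (M.word p).length = 0) :
    (sys T G).lastLoc M ρ p = ρ (p, (M.word p).length) := if_neg h

theorem sys_complete (T : Tr A Alph) (G : Set T.Q → Prop) {M : PreCBM A Alph} (hM : M.IsCBM)
    (q : A.Event → T.Q) (hq : ∀ e, M.isEvent e → LabAt T M (fun _ => False) q e)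
    (hG : G (visited M q)) : (sys T G).AcceptsPre M := by
  refine ⟨locOf T M q, ⟨?_, ?_⟩, ?_, ?_⟩
  · intro e he hi
    obtain ⟨a, ha⟩ := label_some he
    refine ⟨a, ha, ?_⟩
    have := tran_locOf T G q he (hq e he) ha
    rw [matOf_none (fun d f h => hi ⟨d, f, Or.inl h⟩)] at this
    exact this
  · intro d e f hm
    obtain ⟨he, hf, hw, hr⟩ := hM.mrel_valid _ _ _ hm
    obtain ⟨a, ha⟩ := label_some he
    obtain ⟨b, hb⟩ := label_some hf
    refine ⟨some (q f), a, b, ha, hb, ⟨hw.symm, q f, rfl, ?_⟩, hr.symm, ?_, rfl⟩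
    · have := tran_locOf T G q he (hq e he) ha
      rw [(matOf_some hM (s := (d, f))).2 hm] at this
      exact this
    · have := tran_locOf T G q hf (hq f hf) hb
      rw [reader_none hM hm] at this
      exact this
  · intro p s nx V h
    by_cases hl : (M.word p).length = 0
    · have h := (last_zero T G M (locOf T M q) p hl).symm.trans h
      cases h
    · have h := (last_pos T G M (locOf T M q) p hl).symm.trans h
      replace h := Option.some.inj h
      simp only [Prod.mk.injEq] at h
      rw [← h.2.1]
      unfold nextOf
      rw [if_neg]
      · rfl
      · intro h'
        have := h'.2
        simp at this
  · convert hG using 1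
    ext s
    simp only [Set.mem_ofPred_eq, visited]
    constructor
    · rintro ⟨p, s₀, nx, V, h, hs⟩
      by_cases hl : (M.word p).length = 0
      · have h := (last_zero T G M (locOf T M q) p hl).symm.trans h
        cases h
      · have h := (last_pos T G M (locOf T M q) p hl).symm.trans h
        replace h := Option.some.inj h
        simp only [Prod.mk.injEq] at h
        rw [← h.2.2] at hs
        obtain ⟨j, hj1, hj2, rfl⟩ := hs
        exact ⟨(p, j), ⟨hj1, hj2⟩, rfl⟩
    · rintro ⟨⟨p, i⟩, ⟨h1, h2⟩, rfl⟩
      simp only at h1 h2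
      exact ⟨p, _, _, _, last_pos T G M (locOf T M q) p (by omega), i, h1, h2, rfl⟩

theorem sys_sound (T : Tr A Alph) (G : Set T.Q → Prop) {M : PreCBM A Alph} (hM : M.IsCBM)
    (h : (sys T G).AcceptsPre M) :
    ∃ q : A.Event → T.Q, (∀ e, M.isEvent e → LabAt T M (fun _ => False) q e) ∧
      G (visited M q) := by
  obtain ⟨ρ, ⟨hint, hmat⟩, hfin, hG⟩ := h
  let ρ' : A.Event → Option (T.Q × Option T.Q × Set T.Q) := ρ
  let q : A.Event → T.Q := fun e => ((ρ' e).map (fun x => x.1)).getD (T.δ e.1 none True none none)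
  have htr : ∀ e, M.isEvent e → ∃ a, M.label e = some a ∧
      Tran T e.1 ((sys T G).prevLoc ρ e) a
        ((matOf M e).map (fun s => (s.1, q s.2))) (ρ' e) := by
    intro e he
    by_cases hi : M.isInternal e
    · obtain ⟨a, ha, h⟩ := hint e he hi
      refine ⟨a, ha, ?_⟩
      rw [matOf_none (fun d f h => hi ⟨d, f, Or.inl h⟩)]
      exact h
    · unfold PreCBM.isInternal at hi
      rw [not_not] at hi
      obtain ⟨d, f, hm | hm⟩ := hi
      · obtain ⟨v, a, b, ha, hb, ⟨_, s, hv, hs⟩, _, _, hv'⟩ := hmat _ _ _ hm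
        refine ⟨a, ha, ?_⟩
        rw [(matOf_some hM (s := (d, f))).2 hm]
        have : q f = s := by
          have : (ρ' f).map (fun x => x.1) = some s := hv'.symm.trans hv
          simp only [q, this, Option.getD_some]
        simp only [Option.map_some, this]
        exact hs
      · obtain ⟨v, a, b, ha, hb, _, _, h, _⟩ := hmat _ _ _ hm
        refine ⟨b, hb, ?_⟩
        rw [reader_none hM hm]
        exact h
  -- the shape of the location at each event
  have hshape : ∀ p k, M.isEvent (p, k + 1) → ∃ nx,
      ρ' (p, k + 1) = some (q (p, k + 1), nx,
        {s | ∃ j, 1 ≤ j ∧ j ≤ k + 1 ∧ q (p, j) = s}) := by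
    intro p k
    induction k with
    | zero =>
      intro he
      obtain ⟨a, ha, s, nx, V, h1, h2, h3⟩ := htr _ he
      have hqs : q (p, 0 + 1) = s := by simp only [q, h1, Option.map_some, Option.getD_some]
      refine ⟨nx, ?_⟩
      rw [h1, hqs]
      rcases h3 with ⟨_, hV⟩ | ⟨s₀, V₀, hp, _⟩
      · rw [hV]
        congr 3
        ext t
        simp only [Set.mem_ofPred_eq, Set.mem_singleton_iff]
        constructor
        · rintro rfl; exact ⟨1, le_rfl, le_rfl, hqs⟩
        · rintro ⟨j, hj1, hj2, rfl⟩
          have : j = 0 + 1 := by omega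
          rw [this, hqs]
      · simp [CPDS.prevLoc, sys] at hp
    | succ k ih =>
      intro he
      have he' : M.isEvent (p, k + 1) := ⟨by simp, by have := he.2; simp only at this ⊢; omega⟩
      obtain ⟨nx', hprev⟩ := ih he'
      obtain ⟨a, ha, s, nx, V, h1, h2, h3⟩ := htr _ he
      have hqs : q (p, k + 1 + 1) = s := by simp only [q, h1, Option.map_some, Option.getD_some]
      have hpl : (sys T G).prevLoc ρ (p, k + 1 + 1) = ρ' (p, k + 1) := by
        simp [CPDS.prevLoc, ρ']
      rw [hpl, hprev] at h3
      refine ⟨nx, ?_⟩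
      rw [h1, hqs]
      rcases h3 with ⟨h, _⟩ | ⟨s₀, V₀, hp, hV⟩
      · cases h
      · simp only [Option.some.injEq, Prod.mk.injEq] at hp
        rw [hV, ← hp.2.2]
        congr 3
        ext t
        simp only [Set.mem_ofPred_eq, Set.mem_union, Set.mem_singleton_iff]
        constructor
        · rintro (⟨j, hj1, hj2, rfl⟩ | rfl)
          · exact ⟨j, hj1, by omega, rfl⟩
          · exact ⟨k + 1 + 1, by omega, le_rfl, hqs⟩
        · rintro ⟨j, hj1, hj2, rfl⟩
          by_cases hjk : j ≤ k + 1
          · exact Or.inl ⟨j, hj1, hjk, rfl⟩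
          · have : j = k + 1 + 1 := by omega
            rw [this, hqs]; exact Or.inr rfl
  have hlast : ∀ p, 0 < (M.word p).length →
      (sys T G).lastLoc M ρ p = ρ' (p, (M.word p).length) := by
    intro p hp
    unfold CPDS.lastLoc
    rw [if_neg (by omega)]
  refine ⟨q, ?_, ?_⟩
  · intro e he
    obtain ⟨a, ha, s, nx, V, h1, h2, h3⟩ := htr e he
    have hqs : q e = s := by simp only [q, h1, Option.map_some, Option.getD_some]
    unfold LabAt
    rw [hqs, ha]
    have hnx : (nextOf M e).map q = nx := by
      unfold nextOf
      split_ifs with hn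
      · obtain ⟨a', ha', s', nx', V', h1', h2', h3'⟩ := htr _ hn
        have hqs' : q (e.1, e.2 + 1) = s' := by
          simp only [q, h1', Option.map_some, Option.getD_some]
        have he1 : ¬ (e.2 + 1 ≤ 1) := by have := he.1; omega
        have hpl : (sys T G).prevLoc ρ (e.1, e.2 + 1) = ρ' e := by
          simp only [CPDS.prevLoc, ρ']
          rw [if_neg he1]
          rfl
        rw [hpl, h1] at h3'
        rcases h3' with ⟨h, _⟩ | ⟨s₀, V₀, hp, hV⟩
        · cases h
        · simp only [Option.some.injEq, Prod.mk.injEq] at hp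
          rw [Option.map_some, hqs', hp.2.1]
      · have hlen : e.2 = (M.word e.1).length := by
          by_contra hne
          apply hn
          have := he.2
          exact ⟨by simp, by simp only; omega⟩
        have hl := hlast e.1 (by have := he.1; omega)
        rw [← hlen] at hl
        have := hfin e.1 s nx V (hl.trans h1)
        rw [this]; rfl
    rw [hnx]
    exact h2
  · convert hG using 1
    ext s
    simp only [visited, Set.mem_ofPred_eq]
    constructor
    · rintro ⟨⟨p, i⟩, ⟨h1, h2⟩, rfl⟩
      simp only at h1 h2
      obtain ⟨k, hk⟩ : ∃ k, (M.word p).length = k + 1 := ⟨(M.word p).length - 1, by omega⟩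
      obtain ⟨nx, hs⟩ := hshape p k ⟨by simp, by simp only; omega⟩
      have hl := hlast p (by omega)
      rw [hk, hs] at hl
      exact ⟨p, _, _, _, hl, i, h1, by omega, rfl⟩
    · rintro ⟨p, s₀, nx, V, h, hs⟩
      by_cases h0 : (M.word p).length = 0
      · unfold CPDS.lastLoc at h
        rw [if_pos h0] at h
        cases h
      · obtain ⟨k, hk⟩ : ∃ k, (M.word p).length = k + 1 := ⟨(M.word p).length - 1, by omega⟩
        obtain ⟨nx', hs'⟩ := hshape p k ⟨by simp, by simp only; omega⟩
        have hl := hlast p (by omega)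
        rw [hk, hs'] at hl
        have := hl.symm.trans h
        replace this := Option.some.inj this
        simp only [Prod.mk.injEq] at this
        rw [← this.2.2] at hs
        obtain ⟨j, hj1, hj2, rfl⟩ := hs
        exact ⟨(p, j), ⟨hj1, by simp only; omega⟩, rfl⟩

end PdlProof

/-- For every architecture `A`, finite alphabet `Alph`, and
every PDL sentence `Φ` (no converse, no intersection, no loop), there exists a
CPDS `S` over `(A, Alph)` such that `L(S) = L_cbm(Φ)`. -/
theorem pdl_to_cpds (A : Architecture) (Alph : Type) [Fintype Alph]
    (Φ : PdlSentence A Alph) (h₁ : Φ.NoInter) (h₂ : Φ.NoConvLoop) :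
    ∃ S : CPDS A Alph, S.lang = pdlLang A Alph Φ := by
  obtain ⟨T, G, hT⟩ := PdlProof.recSent Φ h₁ h₂
  refine ⟨PdlProof.sys T G, ?_⟩
  ext M
  constructor
  · intro h
    obtain ⟨q, hq, hG⟩ := PdlProof.sys_sound T G M.2 h
    exact (hT M.1 M.2 q hq).1 hG
  · intro h
    obtain ⟨q, hq⟩ := PdlProof.exists_lab T M.2 (fun _ => False)
    exact PdlProof.sys_complete T G M.2 q hq ((hT M.1 M.2 q hq).2 h)
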